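/- Two-variable Toda-type recurrence: with T̃_{k,ℓ}(x,y) = det_{k×k}(g̃_{2i−j+ℓ}(x,y)) where g̃_m(x,y) = Σ_{j≥0, m+2j≥0} x^{m+2j} y^j/(j!(m+2j)!), one has, for all k ≥ 1, ℓ ∈ ℤ, and x,y ∈ ℂ: T̃_{k+1,ℓ} · T̃_{k−1,ℓ} = T̃_{k,ℓ} · ∂²T̃_{k,ℓ}/∂x∂y − (∂T̃_{k,ℓ}/∂x) · (∂T̃_{k,ℓ}/∂y), where T̃_{0,ℓ} = 1. -/

import Mathlib

open scoped Nat

/-- `g̃_m(x,y) = Σ_{j ≥ 0, m+2j ≥ 0} x^{m+2j} y^j / (j! (m+2j)!)`. -/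
noncomputable def gTilde (m : ℤ) (x y : ℂ) : ℂ :=
  ∑' j : ℕ, if 0 ≤ m + 2 * (j : ℤ) then
    x ^ (m + 2 * (j : ℤ)).toNat * y ^ j / ((j ! : ℂ) * ((m + 2 * (j : ℤ)).toNat ! : ℂ))
  else 0

/-- The two-variable tau function `T̃_{k,ℓ}(x,y) = det_{k×k}(g̃_{2i−j+ℓ}(x,y))`
(with `T̃_{0,ℓ} = 1`, the empty determinant). -/
noncomputable def tauTilde (k : ℕ) (ℓ : ℤ) (x y : ℂ) : ℂ :=
  Matrix.det (Matrix.of fun i j : Fin k => gTilde (2 * (i : ℤ) - (j : ℤ) + 1 + ℓ) x y)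

/-!
Moving one column to the right under `∂/∂x` and one row down under `∂/∂y`, the entries of a
two-directional Wronskian make its derivatives single minors: in the derivative of the determinant
every term but one has two equal columns (or rows). The Toda recurrence is therefore the
Desnanot–Jacobi identity for the next larger matrix (Darboux). It applies to `T̃_{k,ℓ}` because
`∂g̃_m/∂x = g̃_{m-1}` and `∂g̃_m/∂y = g̃_{m+2}`.
-/

section SylvesterIdentity

variable {m n R S : Type*} [Fintype m] [DecidableEq m] [CommRing R] [CommRing S]

/-- The minors of a block matrix obtained by bordering its top left block with one further row and
one further column, arranged as a matrix; Sylvester's identity evaluates the determinant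
of that matrix. -/
def borderedMinors (M : Matrix (m ⊕ n) (m ⊕ n) R) : Matrix n n R :=
  Matrix.of fun a b =>
    (M.submatrix (Sum.map id fun _ : Fin 1 => a) (Sum.map id fun _ : Fin 1 => b)).det

lemma borderedMinors_map (f : R →+* S) (M : Matrix (m ⊕ n) (m ⊕ n) R) :
    borderedMinors (M.map f) = (borderedMinors M).map f := by
  ext a b
  exact (f.map_det _).symm

lemma borderedMinors_eq_det_smul_schur (M : Matrix (m ⊕ n) (m ⊕ n) R)
    [Invertible M.toBlocks₁₁] :
    borderedMinors M =
      M.toBlocks₁₁.det • (M.toBlocks₂₂ - M.toBlocks₂₁ * ⅟M.toBlocks₁₁ * M.toBlocks₁₂) := by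
  ext a b
  have hblocks : M.submatrix (Sum.map id fun _ : Fin 1 => a) (Sum.map id fun _ : Fin 1 => b) =
      Matrix.fromBlocks M.toBlocks₁₁ (M.toBlocks₁₂.submatrix id fun _ => b)
        (M.toBlocks₂₁.submatrix (fun _ => a) id)
        (M.toBlocks₂₂.submatrix (fun _ => a) fun _ => b) := by
    ext (i | i) (j | j) <;> rfl
  rw [borderedMinors, Matrix.of_apply, hblocks, Matrix.det_fromBlocks₁₁, Matrix.det_fin_one]
  rfl

variable [Fintype n] [DecidableEq n] [Nonempty n]

lemma det_borderedMinors_of_isUnit (M : Matrix (m ⊕ n) (m ⊕ n) R)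
    (hM : IsUnit M.toBlocks₁₁.det) :
    (borderedMinors M).det = M.toBlocks₁₁.det ^ (Fintype.card n - 1) * M.det := by
  let _ := Matrix.invertibleOfIsUnitDet _ hM
  have hdet : M.det = M.toBlocks₁₁.det *
      (M.toBlocks₂₂ - M.toBlocks₂₁ * ⅟M.toBlocks₁₁ * M.toBlocks₁₂).det := by
    conv_lhs => rw [← Matrix.fromBlocks_toBlocks M, Matrix.det_fromBlocks₁₁]
  rw [borderedMinors_eq_det_smul_schur, Matrix.det_smul, hdet, ← mul_assoc,
    pow_sub_one_mul Fintype.card_ne_zero]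

lemma det_borderedMinors_of_mem_nonZeroDivisors (M : Matrix (m ⊕ n) (m ⊕ n) R)
    (hM : M.toBlocks₁₁.det ∈ nonZeroDivisors R) :
    (borderedMinors M).det = M.toBlocks₁₁.det ^ (Fintype.card n - 1) * M.det := by
  let ι := algebraMap R (FractionRing R)
  have hblock : (M.map ι).toBlocks₁₁.det = ι M.toBlocks₁₁.det := (ι.map_det _).symm
  have hunit : IsUnit (M.map ι).toBlocks₁₁.det :=
    hblock ▸ IsLocalization.map_units (FractionRing R) ⟨_, hM⟩
  apply IsFractionRing.injective R (FractionRing R)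
  simpa only [borderedMinors_map, hblock, map_mul, map_pow, RingHom.map_det,
    RingHom.mapMatrix_apply] using det_borderedMinors_of_isUnit (M.map ι) hunit

open Polynomial in
theorem det_borderedMinors (M : Matrix (m ⊕ n) (m ⊕ n) R) :
    (borderedMinors M).det = M.toBlocks₁₁.det ^ (Fintype.card n - 1) * M.det := by
  -- Adding `X` to the diagonal of the top left block makes its determinant monic.
  let N : Matrix (m ⊕ n) (m ⊕ n) R[X] :=
    Matrix.fromBlocks ((X : R[X]) • (1 : Matrix m m R[X])) 0 0 0 + M.map C
  have hN₁₁ : N.toBlocks₁₁ = (X : R[X]) • (1 : Matrix m m R[X]) + M.toBlocks₁₁.map C := rfl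
  have hmonic : N.toBlocks₁₁.det.Monic := by
    rw [hN₁₁]
    exact leadingCoeff_det_X_one_add_C _
  have heval : N.map (evalRingHom 0) = M := by
    ext (i | i) (j | j) <;> simp [N]
  have heval₁₁ : evalRingHom 0 N.toBlocks₁₁.det = M.toBlocks₁₁.det := by
    rw [RingHom.map_det]
    exact congrArg (fun A => A.toBlocks₁₁.det) heval
  have h := congrArg (evalRingHom 0)
    (det_borderedMinors_of_mem_nonZeroDivisors N hmonic.mem_nonZeroDivisors)
  simpa only [map_mul, map_pow, heval₁₁, RingHom.map_det, RingHom.mapMatrix_apply,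
    ← borderedMinors_map, heval] using h

end SylvesterIdentity

theorem desnanot_jacobi {R : Type*} [CommRing R] {n : ℕ}
    (M : Matrix (Fin (n + 2)) (Fin (n + 2)) R) :
    M.det * (M.submatrix (Fin.castAdd 2) (Fin.castAdd 2)).det =
      (M.submatrix Fin.castSucc Fin.castSucc).det *
          (M.submatrix (Fin.last n).castSucc.succAbove (Fin.last n).castSucc.succAbove).det -
        (M.submatrix Fin.castSucc (Fin.last n).castSucc.succAbove).det *
          (M.submatrix (Fin.last n).castSucc.succAbove Fin.castSucc).det := by
  let N := M.submatrix (finSumFinEquiv : Fin n ⊕ Fin 2 ≃ Fin (n + 2)) finSumFinEquiv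
  let border : Fin 2 → Fin (n + 1) → Fin (n + 2) :=
    ![Fin.castSucc, (Fin.last n).castSucc.succAbove]
  have hborder (a : Fin 2) :
      finSumFinEquiv ∘ Sum.map id (fun _ : Fin 1 => a) = border a ∘ finSumFinEquiv := by
    have hlast : (finSumFinEquiv (.inr 0 : Fin n ⊕ Fin 1)) = Fin.last n := rfl
    funext i
    fin_cases a <;> rcases i with i | i
    · rfl
    · rw [Subsingleton.elim i 0]
      rfl
    · exact (Fin.succAbove_castSucc_of_lt (Fin.last n) i.castSucc i.castSucc_lt_last).symm
    · rw [Subsingleton.elim i 0, Function.comp_apply, Function.comp_apply, hlast]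
      exact (Fin.succAbove_castSucc_self (Fin.last n)).symm
  have hminor (a b : Fin 2) : borderedMinors N a b = (M.submatrix (border a) (border b)).det := by
    rw [borderedMinors, Matrix.of_apply, Matrix.submatrix_submatrix, hborder, hborder,
      ← Matrix.submatrix_submatrix, Matrix.det_submatrix_equiv_self]
  calc M.det * (M.submatrix (Fin.castAdd 2) (Fin.castAdd 2)).det
      = N.toBlocks₁₁.det ^ (Fintype.card (Fin 2) - 1) * N.det := by
        rw [Matrix.det_submatrix_equiv_self, Fintype.card_fin, pow_one, mul_comm]
        rfl
    _ = (borderedMinors N).det := (det_borderedMinors N).symm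
    _ = (M.submatrix (border 0) (border 0)).det * (M.submatrix (border 1) (border 1)).det -
          (M.submatrix (border 0) (border 1)).det * (M.submatrix (border 1) (border 0)).det := by
        simp only [Matrix.det_fin_two, hminor]

section Wronskian

variable {𝕜 𝔸 : Type*} [NontriviallyNormedField 𝕜] [NormedCommRing 𝔸] [NormedAlgebra 𝕜 𝔸]

lemma hasDerivAt_det {n : Type*} [Fintype n] [DecidableEq n] {A : 𝕜 → Matrix n n 𝔸}
    {A' : Matrix n n 𝔸} {t : 𝕜} (h : ∀ i j, HasDerivAt (fun s => A s i j) (A' i j) t) :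
    HasDerivAt (fun s => (A s).det) (∑ j, ((A t).updateCol j fun i => A' i j).det) t := by
  have hprod (σ : Equiv.Perm n) : HasDerivAt (fun s => ∏ j, A s (σ j) j)
      (∑ j, ∏ k, (A t).updateCol j (fun i => A' i j) (σ k) k) t := by
    refine (HasDerivAt.fun_finsetProd fun j _ => h (σ j) j).congr_deriv ?_
    refine Finset.sum_congr rfl fun j _ => ?_
    rw [← Finset.prod_erase_mul _ _ (Finset.mem_univ j), smul_eq_mul, Matrix.updateCol_self]
    congr 1
    refine Finset.prod_congr rfl fun k hk => ?_
    rw [Matrix.updateCol_ne (Finset.ne_of_mem_erase hk)]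
  simp only [Matrix.det_apply']
  rw [Finset.sum_comm]
  simp only [← Finset.mul_sum]
  exact HasDerivAt.fun_sum fun σ _ => (hprod σ).const_mul _

lemma hasDerivAt_det_submatrix_id_castSucc {n : ℕ} {A : 𝕜 → Matrix (Fin (n + 1)) (Fin (n + 2)) 𝔸}
    {t : 𝕜} (h : ∀ i (j : Fin (n + 1)),
      HasDerivAt (fun s => A s i j.castSucc) (A t i j.succ) t) :
    HasDerivAt (fun s => ((A s).submatrix id Fin.castSucc).det)
      ((A t).submatrix id (Fin.last n).castSucc.succAbove).det t := by
  refine (hasDerivAt_det (A := fun s => (A s).submatrix id Fin.castSucc)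
    (A' := (A t).submatrix id Fin.succ) h).congr_deriv ?_
  rw [Fin.sum_univ_castSucc, Finset.sum_eq_zero, zero_add]
  · congr 1
    ext i j
    cases j using Fin.lastCases with
    | last => simp
    | cast j => simp [(Fin.castSucc_lt_last j).ne, Fin.succAbove_castSucc_of_lt]
  · intro j _
    refine Matrix.det_zero_of_column_eq (Fin.castSucc_lt_succ (i := j)).ne fun i => ?_
    rw [Matrix.updateCol_self, Matrix.updateCol_ne (Fin.castSucc_lt_succ (i := j)).ne']
    rfl

lemma hasDerivAt_det_submatrix_castSucc_id {n : ℕ} {A : 𝕜 → Matrix (Fin (n + 2)) (Fin (n + 1)) 𝔸}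
    {t : 𝕜} (h : ∀ (i : Fin (n + 1)) j,
      HasDerivAt (fun s => A s i.castSucc j) (A t i.succ j) t) :
    HasDerivAt (fun s => ((A s).submatrix Fin.castSucc id).det)
      ((A t).submatrix (Fin.last n).castSucc.succAbove id).det t := by
  simpa only [← Matrix.transpose_submatrix, Matrix.det_transpose] using
    hasDerivAt_det_submatrix_id_castSucc (A := fun s => (A s).transpose) fun i j => h j i

/-- The leading `n × n` minor of a doubly infinite array of functions of two variables. When `∂/∂x`
raises the second index and `∂/∂y` the first, this is the two-directional Wronskian of `f 0 0`. -/
def doubleWronskian (f : ℕ → ℕ → 𝕜 → 𝕜 → 𝔸) (n : ℕ) (x y : 𝕜) : 𝔸 :=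
  (Matrix.of fun i j : Fin n => f i j x y).det

theorem doubleWronskian_toda {f : ℕ → ℕ → 𝕜 → 𝕜 → 𝔸}
    (hfx : ∀ i j x y, HasDerivAt (fun x' => f i j x' y) (f i (j + 1) x y) x)
    (hfy : ∀ i j x y, HasDerivAt (fun y' => f i j x y') (f (i + 1) j x y) y)
    (n : ℕ) (x y : 𝕜) :
    doubleWronskian f (n + 2) x y * doubleWronskian f n x y =
      doubleWronskian f (n + 1) x y *
          deriv (fun x' => deriv (fun y' => doubleWronskian f (n + 1) x' y') y) x -
        deriv (fun x' => doubleWronskian f (n + 1) x' y) x *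
          deriv (fun y' => doubleWronskian f (n + 1) x y') y := by
  let Φ (x y : 𝕜) : Matrix (Fin (n + 2)) (Fin (n + 2)) 𝔸 := Matrix.of fun i j => f i j x y
  let skip : Fin (n + 1) → Fin (n + 2) := (Fin.last n).castSucc.succAbove
  have hx (r : Fin (n + 1) → Fin (n + 2)) :
      HasDerivAt (fun x' => ((Φ x' y).submatrix r Fin.castSucc).det)
        ((Φ x y).submatrix r skip).det x :=
    hasDerivAt_det_submatrix_id_castSucc (A := fun x' => (Φ x' y).submatrix r id)
      fun i j => hfx (r i) j x y
  have hy (x : 𝕜) : HasDerivAt (fun y' => doubleWronskian f (n + 1) x y')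
      ((Φ x y).submatrix skip Fin.castSucc).det y :=
    hasDerivAt_det_submatrix_castSucc_id (A := fun y' => (Φ x y').submatrix id Fin.castSucc)
      fun i j => hfy i j x y
  have hτx : deriv (fun x' => doubleWronskian f (n + 1) x' y) x =
      ((Φ x y).submatrix Fin.castSucc skip).det := (hx Fin.castSucc).deriv
  rw [funext fun x' => (hy x').deriv, (hx skip).deriv, (hy x).deriv, hτx]
  exact desnanot_jacobi (Φ x y)

end Wronskian

section DividedPow

variable {𝕜 : Type*} [RCLike 𝕜]

/-- The divided power `z ^ n / n!`, extended by zero to negative exponents, so that differentiation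
lowers `n` by one without exception. -/
noncomputable def dividedPow (n : ℤ) (z : 𝕜) : 𝕜 :=
  if 0 ≤ n then z ^ n.toNat / (n.toNat ! : 𝕜) else 0

lemma dividedPow_natCast (n : ℕ) (z : 𝕜) : dividedPow n z = z ^ n / (n ! : 𝕜) := by
  simp [dividedPow]

lemma dividedPow_of_neg {n : ℤ} (hn : n < 0) (z : 𝕜) : dividedPow n z = 0 :=
  if_neg hn.not_ge

lemma support_dividedPow_subset (z : 𝕜) :
    Function.support (fun n : ℤ => dividedPow n z) ⊆ Set.range ((↑) : ℕ → ℤ) := by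
  intro n hn
  have hn₀ : 0 ≤ n := by
    contrapose! hn
    simp [dividedPow_of_neg hn]
  exact ⟨n.toNat, Int.toNat_of_nonneg hn₀⟩

lemma summable_dividedPow (z : 𝕜) : Summable fun n : ℤ => dividedPow n z := by
  have hsupp (n : ℤ) (hn : n ∉ Set.range ((↑) : ℕ → ℤ)) : dividedPow n z = 0 :=
    Function.notMem_support.mp fun h => hn (support_dividedPow_subset z h)
  rw [← Nat.cast_injective.summable_iff hsupp]
  simpa only [Function.comp_def, dividedPow_natCast] using NormedSpace.expSeries_div_summable z

lemma hasDerivAt_dividedPow (n : ℤ) (z : 𝕜) :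
    HasDerivAt (dividedPow n) (dividedPow (n - 1) z) z := by
  rcases lt_or_ge n 0 with hn | hn
  · rw [dividedPow_of_neg (by lia), funext (dividedPow_of_neg hn)]
    exact hasDerivAt_const _ _
  lift n to ℕ using hn
  rw [funext (dividedPow_natCast n)]
  cases n with
  | zero =>
    rw [dividedPow_of_neg (by simp)]
    simpa using hasDerivAt_const z (1 : 𝕜)
  | succ n =>
    refine ((hasDerivAt_pow (n + 1) z).div_const _).congr_deriv ?_
    rw [Nat.cast_succ (R := ℤ), add_sub_cancel_right, dividedPow_natCast, Nat.factorial_succ,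
      Nat.cast_mul, add_tsub_cancel_right,
      mul_div_mul_left _ _ (Nat.cast_ne_zero.mpr n.succ_ne_zero)]

lemma norm_dividedPow_le_exp (n : ℤ) {z : 𝕜} {r : ℝ} (hz : ‖z‖ ≤ r) :
    ‖dividedPow n z‖ ≤ Real.exp r := by
  rcases lt_or_ge n 0 with hn | hn
  · rw [dividedPow_of_neg hn, norm_zero]
    positivity
  lift n to ℕ using hn
  calc ‖dividedPow n z‖ = ‖z‖ ^ n / n ! := by
        rw [dividedPow_natCast, norm_div, norm_pow, RCLike.norm_natCast]
    _ ≤ Real.exp ‖z‖ := Real.pow_div_factorial_le_exp _ (norm_nonneg z) n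
    _ ≤ Real.exp r := Real.exp_le_exp.mpr hz

lemma hasDerivAt_tsum_mul_dividedPow {ι : Type*} {c : ι → 𝕜} (hc : Summable c) (n : ι → ℤ)
    (z : 𝕜) :
    HasDerivAt (fun w => ∑' i, c i * dividedPow (n i) w)
      (∑' i, c i * dividedPow (n i - 1) z) z := by
  have hbound (n : ι → ℤ) (i : ι) {w : 𝕜} (hw : w ∈ Metric.ball 0 (‖z‖ + 1)) :
      ‖c i * dividedPow (n i) w‖ ≤ ‖c i‖ * Real.exp (‖z‖ + 1) := by
    rw [norm_mul]
    gcongr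
    exact norm_dividedPow_le_exp _ (mem_ball_zero_iff.mp hw).le
  have hsummable : Summable fun i => ‖c i‖ * Real.exp (‖z‖ + 1) := hc.norm.mul_right _
  have hz : z ∈ Metric.ball 0 (‖z‖ + 1) := by simp
  exact hasDerivAt_tsum_of_isPreconnected hsummable Metric.isOpen_ball
    (convex_ball _ _).isPreconnected (fun i w _ => (hasDerivAt_dividedPow (n i) w).const_mul _)
    (fun i w hw => hbound (fun i => n i - 1) i hw) hz
    (.of_norm_bounded hsummable fun i => hbound n i hz) hz

end DividedPow

-- Extending the sum over `j` to all integers turns the shift of `j` under `∂/∂y` into a bijection.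
lemma gTilde_eq_tsum_int (m : ℤ) (x y : ℂ) :
    gTilde m x y = ∑' j : ℤ, dividedPow (m + 2 * j) x * dividedPow j y := by
  have hsupp : Function.support (fun j : ℤ => dividedPow (m + 2 * j) x * dividedPow j y) ⊆
      Set.range ((↑) : ℕ → ℤ) :=
    (Function.support_mul_subset_right _ _).trans (support_dividedPow_subset y)
  rw [← Nat.cast_injective.tsum_eq hsupp]
  refine tsum_congr fun j => ?_
  rw [dividedPow_natCast, dividedPow, ite_mul, zero_mul, div_mul_div_comm, mul_comm (j ! : ℂ)]

lemma hasDerivAt_gTilde_left (m : ℤ) (x y : ℂ) :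
    HasDerivAt (fun x' => gTilde m x' y) (gTilde (m - 1) x y) x := by
  simp only [gTilde_eq_tsum_int, mul_comm _ (dividedPow _ y), sub_add_eq_add_sub m 1]
  exact hasDerivAt_tsum_mul_dividedPow (summable_dividedPow y) (fun j => m + 2 * j) x

lemma hasDerivAt_gTilde_right (m : ℤ) (x y : ℂ) :
    HasDerivAt (fun y' => gTilde m x y') (gTilde (m + 2) x y) y := by
  have hinj : Function.Injective fun j : ℤ => m + 2 * j := fun i j h => by simpa using h
  have hshift : gTilde (m + 2) x y =
      ∑' j : ℤ, dividedPow (m + 2 * j) x * dividedPow (j - 1) y := by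
    rw [gTilde_eq_tsum_int, ← (Equiv.subRight (1 : ℤ)).tsum_eq]
    refine tsum_congr fun j => ?_
    rw [Equiv.subRight_apply, show m + 2 + 2 * (j - 1) = m + 2 * j by ring]
  rw [hshift]
  simp only [gTilde_eq_tsum_int]
  exact hasDerivAt_tsum_mul_dividedPow ((summable_dividedPow x).comp_injective hinj) id y

/-- Two-variable Toda-type recurrence: for all `k ≥ 1`, `ℓ ∈ ℤ`, `x, y ∈ ℂ`:
`T̃_{k+1,ℓ} T̃_{k−1,ℓ} = T̃_{k,ℓ} ∂²T̃_{k,ℓ}/∂x∂y − (∂T̃_{k,ℓ}/∂x)(∂T̃_{k,ℓ}/∂y)`. -/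
theorem tauTilde_toda (k : ℕ) (hk : 1 ≤ k) (ℓ : ℤ) (x y : ℂ) :
    tauTilde (k + 1) ℓ x y * tauTilde (k - 1) ℓ x y
      = tauTilde k ℓ x y *
          deriv (fun x' => deriv (fun y' => tauTilde k ℓ x' y') y) x
        - deriv (fun x' => tauTilde k ℓ x' y) x * deriv (fun y' => tauTilde k ℓ x y') y := by
  obtain ⟨n, rfl⟩ := Nat.exists_eq_add_of_le' hk
  refine doubleWronskian_toda (f := fun i j x y => gTilde (2 * (i : ℤ) - (j : ℤ) + 1 + ℓ) x y)
    (fun i j x y => ?_) (fun i j x y => ?_) n x y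
  · have hindex : 2 * (i : ℤ) - j + 1 + ℓ - 1 = 2 * (i : ℤ) - (j + 1 : ℕ) + 1 + ℓ := by
      push_cast
      ring
    exact hindex ▸ hasDerivAt_gTilde_left (2 * (i : ℤ) - j + 1 + ℓ) x y
  · have hindex : 2 * (i : ℤ) - j + 1 + ℓ + 2 = 2 * ((i + 1 : ℕ) : ℤ) - j + 1 + ℓ := by
      push_cast
      ring
    exact hindex ▸ hasDerivAt_gTilde_right (2 * (i : ℤ) - j + 1 + ℓ) x y
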